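/- Let ε ∈ [1/n, 1/30] with s := 1/ε a positive integer, and let G = (V, E, w) be an S1-graph on n vertices, i.e., a weighted graph such that all edge weights satisfy w(e) ∈ [γ, 2γ) for some γ > ε², and the expansion constant Γ_G = min over nonempty S ⊆ V with |S| ≤ n/2 of |∂(S,S̄)|/|S| is at least 1/ε. Independently for each non-isolated vertex u, draw s independent uniform samples from the set of edges incident to u (each incident edge sampled with probability 1/d_u, with replacement), and let Y_u^v be the number of times edge (u,v) is sampled at u. For a subset S ⊆ V define the estimator I_G = Σ_{u∈S} [ δ_u − (d_u/s)·Σ_{v∈S, (u,v)∈E} Y_u^v·w(u,v) ]. Then for every S ⊆ V with |S| ≤ n/2 and cut weight w(S,S̄) ≤ 5: the expectation of I_G equals w(S,S̄), and with probability at least 8/9 one has |I_G − w(S,S̄)| ≤ 21·ε·w(S,S̄). -/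

import Mathlib

open scoped Classical

/-- Unweighted degree of vertex `u` (number of incident edges). -/
noncomputable def udeg {n : ℕ} (w : Fin n → Fin n → ℝ) (u : Fin n) : ℕ :=
  (Finset.univ.filter (fun v => 0 < w u v)).card

/-- Weighted degree of vertex `u`. -/
noncomputable def wdeg {n : ℕ} (w : Fin n → Fin n → ℝ) (u : Fin n) : ℝ :=
  ∑ v, w u v

/-- Weight of the cut `(S, S̄)`. -/
noncomputable def cutW {n : ℕ} (w : Fin n → Fin n → ℝ) (S : Finset (Fin n)) : ℝ :=
  ∑ p ∈ Finset.univ.filter (fun p : Fin n × Fin n => p.1 ∈ S ∧ p.2 ∉ S), w p.1 p.2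

/-- Number of edges in the cut `(S, S̄)`. -/
noncomputable def cutE {n : ℕ} (w : Fin n → Fin n → ℝ) (S : Finset (Fin n)) : ℕ :=
  (Finset.univ.filter
    (fun p : Fin n × Fin n => p.1 ∈ S ∧ p.2 ∉ S ∧ 0 < w p.1 p.2)).card

/-- Probability of the sample outcome `ω`, where independently each vertex `u` draws
`s` independent samples, each being a uniformly random neighbor of `u` (i.e., each edge
incident to `u` is sampled with probability `1 / d_u`).  Isolated vertices draw the
dummy sample `u` itself with probability `1`. -/
noncomputable def sampleProb {n s : ℕ} (w : Fin n → Fin n → ℝ)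
    (ω : Fin n → Fin s → Fin n) : ℝ :=
  ∏ u, ∏ j,
    (if udeg w u = 0 then (if ω u j = u then (1 : ℝ) else 0)
      else (if 0 < w u (ω u j) then 1 / (udeg w u : ℝ) else 0))

/-- `Y_u^v`: the number of times the edge `(u, v)` is sampled at `u`. -/
noncomputable def Ycount {n s : ℕ} (ω : Fin n → Fin s → Fin n) (u v : Fin n) : ℕ :=
  (Finset.univ.filter (fun j : Fin s => ω u j = v)).card

/-- The estimator `I_G` for the weight of the cut `(S, S̄)`. -/
noncomputable def estI {n s : ℕ} (w : Fin n → Fin n → ℝ) (S : Finset (Fin n))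
    (ω : Fin n → Fin s → Fin n) : ℝ :=
  ∑ u ∈ S, (wdeg w u - (udeg w u : ℝ) / (s : ℝ) *
    ∑ v ∈ S, (Ycount ω u v : ℝ) * w u v)

/-!
The estimator is a sum, over the vertices `u ∈ S` and the `s` draws at `u`, of independent terms:
each draw contributes `d_u · w(u, v) · 1_S(v)` for a uniform neighbor `v` of `u`, whose mean is the
weight from `u` into `S`. Hence `I_G` has mean `w(S, S̄)`, and its variance is at most
`(1/s) ∑_{u ∈ S} d_u ∑_{v ∈ S} w(u, v)² ≤ ε (2γ)² |S| (|S|² + |∂S|)`, as `∑_{u ∈ S} d_u` counts at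
most `|S|²` edge ends inside `S` and `|∂S|` across the cut.

With `k = |S|`, `m = |∂S|` and `c = w(S, S̄)`, expansion gives `k ≤ ε m` and the weights give
`γ m ≤ c`, so `γ k ≤ ε c`; as `ε² < γ`, also `ε k ≤ c`. The variance bound is therefore at most
`4 (c + 1) (ε c)²`, so by Chebyshev's inequality a deviation of more than `21 ε c` has probability
at most `4 (c + 1) / 21² ≤ 24 / 441 < 1 / 9`.
-/

open MeasureTheory ProbabilityTheory

lemma one_sub_variance_div_sq_le_measureReal {Ω : Type*} {mΩ : MeasurableSpace Ω} {μ : Measure Ω}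
    [IsProbabilityMeasure μ] {X : Ω → ℝ} (hX : MemLp X 2 μ) {c : ℝ} (hc : 0 < c) :
    1 - Var[X; μ] / c ^ 2 ≤ μ.real {ω | |X ω - μ[X]| ≤ c} := by
  have hbad : μ.real {ω | c ≤ |X ω - μ[X]|} ≤ Var[X; μ] / c ^ 2 :=
    ENNReal.toReal_le_of_le_ofReal (div_nonneg (variance_nonneg X μ) (sq_nonneg c))
      (meas_ge_le_variance_div_sq hX hc)
  have hcover : {ω | |X ω - μ[X]| ≤ c} ∪ {ω | c ≤ |X ω - μ[X]|} = Set.univ :=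
    Set.eq_univ_of_forall fun ω ↦ le_total |X ω - ∫ ω', X ω' ∂μ| c
  have hunion := measureReal_union_le (μ := μ) {ω | |X ω - μ[X]| ≤ c} {ω | c ≤ |X ω - μ[X]|}
  rw [hcover, probReal_univ] at hunion
  linarith

lemma variance_finsetSum_pi {ι : Type*} [Fintype ι] {Ω : ι → Type*}
    {mΩ : ∀ i, MeasurableSpace (Ω i)} {μ : ∀ i, Measure (Ω i)} [∀ i, IsProbabilityMeasure (μ i)]
    {X : ∀ i, Ω i → ℝ} {t : Finset ι} (hX : ∀ i ∈ t, MemLp (X i) 2 (μ i)) :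
    Var[fun ω ↦ ∑ i ∈ t, X i (ω i); Measure.pi μ] = ∑ i ∈ t, Var[X i; μ i] := by
  have hY : ∀ i, MemLp (if i ∈ t then X i else 0) 2 (μ i) := fun i ↦ by
    split_ifs with hi
    · exact hX i hi
    · exact MemLp.zero
  have hvar (i : ι) : Var[if i ∈ t then X i else 0; μ i] = if i ∈ t then Var[X i; μ i] else 0 := by
    split_ifs
    · rfl
    · exact variance_zero (μ i)
  convert! variance_sum_pi hY using 1
  · congr 1
    ext ω
    simp [Finset.sum_apply, ite_apply, Finset.sum_ite_mem]
  · simp_rw [hvar, Finset.sum_ite_mem, Finset.univ_inter]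

lemma integral_toMeasure_uniformOfFinset {α : Type*} [Finite α] [MeasurableSpace α]
    [MeasurableSingletonClass α] {A : Finset α} (hA : A.Nonempty) (g : α → ℝ) :
    ∫ a, g a ∂(PMF.uniformOfFinset A hA).toMeasure = (∑ a ∈ A, g a) / A.card := by
  have := Fintype.ofFinite α
  simp [PMF.integral_eq_sum, PMF.uniformOfFinset_apply, ite_mul, Finset.sum_ite_mem,
    apply_ite ENNReal.toReal, Finset.mul_sum, div_eq_inv_mul]

section Sampling

variable {n : ℕ} {w : Fin n → Fin n → ℝ}

lemma udeg_eq_zero_iff {u : Fin n} : udeg w u = 0 ↔ ∀ v, ¬ 0 < w u v := by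
  simp [udeg, Finset.filter_eq_empty_iff]

lemma filter_pos_nonempty {u : Fin n} (h : udeg w u ≠ 0) :
    (Finset.univ.filter fun v ↦ 0 < w u v).Nonempty :=
  Finset.card_ne_zero.mp h

/-- The law of a single sample at `u`: the other end of a uniformly random edge incident to `u`,
or `u` itself if there is none. -/
noncomputable def neighborPMF (w : Fin n → Fin n → ℝ) (u : Fin n) : PMF (Fin n) :=
  if h : udeg w u = 0 then PMF.pure u
  else PMF.uniformOfFinset (Finset.univ.filter fun v ↦ 0 < w u v) (filter_pos_nonempty h)

/-- The law of the whole sample as a product measure; `sampleProb` is its mass function. -/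
noncomputable def sampleMeasure (s : ℕ) (w : Fin n → Fin n → ℝ) :
    Measure (Fin n → Fin s → Fin n) :=
  Measure.pi fun u ↦ Measure.pi fun _ ↦ (neighborPMF w u).toMeasure

instance (s : ℕ) (w : Fin n → Fin n → ℝ) : IsProbabilityMeasure (sampleMeasure s w) := by
  unfold sampleMeasure
  infer_instance

lemma toReal_neighborPMF_apply (u v : Fin n) :
    (neighborPMF w u v).toReal =
      if udeg w u = 0 then (if v = u then (1 : ℝ) else 0)
      else (if 0 < w u v then 1 / (udeg w u : ℝ) else 0) := by
  by_cases h : udeg w u = 0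
  · simp [neighborPMF, h, PMF.pure_apply, apply_ite ENNReal.toReal]
  · rw [neighborPMF, dif_neg h, if_neg h, PMF.uniformOfFinset_apply, ← udeg]
    simp [apply_ite ENNReal.toReal]

lemma measureReal_sampleMeasure_singleton {s : ℕ} (ω : Fin n → Fin s → Fin n) :
    (sampleMeasure s w).real {ω} = sampleProb w ω := by
  simp [sampleMeasure, sampleProb, Measure.real, Measure.pi_singleton, ENNReal.toReal_prod,
    toReal_neighborPMF_apply]

lemma integral_sampleMeasure {s : ℕ} (X : (Fin n → Fin s → Fin n) → ℝ) :
    ∫ ω, X ω ∂sampleMeasure s w = ∑ ω, sampleProb w ω * X ω := by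
  simp [integral_fintype, measureReal_sampleMeasure_singleton]

lemma measureReal_sampleMeasure_setOf {s : ℕ} (p : (Fin n → Fin s → Fin n) → Prop) :
    (sampleMeasure s w).real {ω | p ω} = ∑ ω ∈ Finset.univ.filter p, sampleProb w ω := by
  simp [← measureReal_sampleMeasure_singleton]

lemma udeg_mul_integral_neighborPMF {u : Fin n} {g : Fin n → ℝ}
    (hg : ∀ v, ¬ 0 < w u v → g v = 0) :
    udeg w u * ∫ v, g v ∂(neighborPMF w u).toMeasure = ∑ v, g v := by
  by_cases h : udeg w u = 0
  · simp [h, hg _ (udeg_eq_zero_iff.mp h _)]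
  · rw [neighborPMF, dif_neg h, integral_toMeasure_uniformOfFinset, ← udeg,
      mul_div_cancel₀ _ (Nat.cast_ne_zero.mpr h)]
    exact Finset.sum_filter_of_ne fun v _ hv ↦ not_not.mp fun hw ↦ hv (hg v hw)

end Sampling

section Estimator

variable {n s : ℕ} {w : Fin n → Fin n → ℝ} {S : Finset (Fin n)}

/-- The contribution of the vertex `u` to the estimator `estI`, as a function of the samples `x`
drawn at `u`. -/
noncomputable def vertexEst (w : Fin n → Fin n → ℝ) (S : Finset (Fin n)) (u : Fin n)
    (x : Fin s → Fin n) : ℝ :=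
  wdeg w u - udeg w u / s * ∑ j, if x j ∈ S then w u (x j) else 0

lemma estI_eq_sum_vertexEst (ω : Fin n → Fin s → Fin n) :
    estI w S ω = ∑ u ∈ S, vertexEst w S u (ω u) := by
  have hcount (u v : Fin n) : (Ycount ω u v : ℝ) * w u v = ∑ j, if ω u j = v then w u v else 0 := by
    rw [Ycount, ← nsmul_eq_mul, ← Finset.sum_const, Finset.sum_filter]
  simp_rw [estI, vertexEst, hcount]
  simp_rw [Finset.sum_comm (s := S) (t := Finset.univ), Finset.sum_ite_eq]

lemma cutW_eq_sum_sum_compl (w : Fin n → Fin n → ℝ) (S : Finset (Fin n)) :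
    cutW w S = ∑ u ∈ S, ∑ v ∈ Sᶜ, w u v := by
  rw [cutW, ← Finset.sum_product']
  congr 1
  ext p
  simp

lemma integral_vertexEst (hs : s ≠ 0) {u : Fin n} (hw : ∀ v, 0 ≤ w u v) :
    ∫ x, vertexEst w S u x ∂Measure.pi (fun _ : Fin s ↦ (neighborPMF w u).toMeasure) =
      ∑ v ∈ Sᶜ, w u v := by
  set μ := (neighborPMF w u).toMeasure
  have hdraw (j : Fin s) : ∫ x, (if x j ∈ S then w u (x j) else 0) ∂Measure.pi (fun _ ↦ μ) =
      ∫ v, (if v ∈ S then w u v else 0) ∂μ :=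
    integral_comp_eval (μ := fun _ : Fin s ↦ μ) (f := fun v ↦ if v ∈ S then w u v else 0)
      .of_discrete
  have hmean : udeg w u * ∫ v, (if v ∈ S then w u v else 0) ∂μ = ∑ v ∈ S, w u v := by
    rw [udeg_mul_integral_neighborPMF, Finset.sum_ite_mem, Finset.univ_inter]
    intro v hv
    simp [le_antisymm (not_lt.mp hv) (hw v)]
  simp_rw [vertexEst]
  rw [integral_sub .of_finite .of_finite, integral_const_mul,
    integral_finsetSum _ fun _ _ ↦ .of_finite]
  simp only [hdraw, integral_const, probReal_univ, one_smul, Finset.sum_const, Finset.card_univ,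
    Fintype.card_fin, nsmul_eq_mul]
  rw [← mul_assoc, div_mul_cancel₀ _ (Nat.cast_ne_zero.mpr hs), hmean, wdeg,
    ← Finset.sum_add_sum_compl S, add_sub_cancel_left]

theorem integral_estI (hs : s ≠ 0) (hw : ∀ u v, 0 ≤ w u v) :
    ∫ ω, estI w S ω ∂sampleMeasure s w = cutW w S := by
  simp_rw [estI_eq_sum_vertexEst]
  rw [integral_finsetSum _ fun _ _ ↦ .of_finite, cutW_eq_sum_sum_compl]
  refine Finset.sum_congr rfl fun u _ ↦ ?_
  rw [← integral_vertexEst hs (hw u)]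
  exact integral_comp_eval (μ := fun u ↦ Measure.pi fun _ ↦ (neighborPMF w u).toMeasure)
    .of_discrete

lemma variance_vertexEst_le {u : Fin n} (hw : ∀ v, 0 ≤ w u v) :
    Var[vertexEst w S u; Measure.pi fun _ : Fin s ↦ (neighborPMF w u).toMeasure] ≤
      udeg w u * (∑ v ∈ S, w u v ^ 2) / s := by
  set μ := (neighborPMF w u).toMeasure
  set d : ℝ := (udeg w u : ℝ)
  set f : Fin n → ℝ := fun v ↦ if v ∈ S then w u v else 0 with hf
  have hvar : Var[vertexEst w S u; Measure.pi fun _ : Fin s ↦ μ] =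
      (d / s) ^ 2 * (s * Var[f; μ]) := by
    change Var[fun x ↦ wdeg w u - d / s * ∑ j, f (x j); Measure.pi fun _ : Fin s ↦ μ] = _
    rw [variance_const_sub .of_discrete, variance_const_mul,
      variance_finsetSum_pi fun _ _ ↦ .of_discrete]
    simp
  have hsecond : d * ∫ v, (f ^ 2) v ∂μ = ∑ v ∈ S, w u v ^ 2 := by
    rw [udeg_mul_integral_neighborPMF]
    · simp [hf, Finset.sum_ite_mem]
    · intro v hv
      simp [hf, le_antisymm (not_lt.mp hv) (hw v)]
  calc Var[vertexEst w S u; Measure.pi fun _ : Fin s ↦ μ]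
      = d / s * (d * Var[f; μ]) := by rw [hvar]; field_simp
    _ ≤ d / s * (d * ∫ v, (f ^ 2) v ∂μ) := by
        gcongr
        exact variance_le_expectation_sq .of_discrete
    _ = d * (∑ v ∈ S, w u v ^ 2) / s := by rw [hsecond]; ring

theorem variance_estI_le (hw : ∀ u v, 0 ≤ w u v) :
    Var[estI w S; sampleMeasure s w] ≤ (∑ u ∈ S, udeg w u * ∑ v ∈ S, w u v ^ 2) / s := by
  rw [funext estI_eq_sum_vertexEst, sampleMeasure, variance_finsetSum_pi fun _ _ ↦ .of_discrete,
    Finset.sum_div]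
  exact Finset.sum_le_sum fun u _ ↦ variance_vertexEst_le (hw u)

end Estimator

section Expansion

variable {n : ℕ} {w : Fin n → Fin n → ℝ} {S : Finset (Fin n)}

lemma cutE_eq_sum_sum_compl (w : Fin n → Fin n → ℝ) (S : Finset (Fin n)) :
    cutE w S = ∑ u ∈ S, ∑ v ∈ Sᶜ, if 0 < w u v then 1 else 0 := by
  rw [cutE, ← Finset.sum_product', ← Finset.sum_filter, Finset.card_eq_sum_ones]
  congr 1
  ext p
  simp [and_assoc]

lemma mul_cutE_le_cutW {γ : ℝ} (hw : ∀ u v, 0 ≤ w u v) (hγ : ∀ u v, 0 < w u v → γ ≤ w u v) :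
    γ * cutE w S ≤ cutW w S := by
  rw [cutE_eq_sum_sum_compl, cutW_eq_sum_sum_compl]
  push_cast
  simp_rw [Finset.mul_sum, mul_ite, mul_one, mul_zero]
  gcongr with u _ v _
  split_ifs with h
  exacts [hγ u v h, hw u v]

lemma sum_udeg_le (w : Fin n → Fin n → ℝ) (S : Finset (Fin n)) :
    ∑ u ∈ S, udeg w u ≤ S.card ^ 2 + cutE w S := by
  have hdeg (u : Fin n) : udeg w u ≤ S.card + ∑ v ∈ Sᶜ, if 0 < w u v then 1 else 0 := by
    rw [udeg, Finset.card_filter, ← Finset.sum_add_sum_compl S, ← Finset.card_filter]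
    gcongr
    exact Finset.filter_subset _ _
  calc ∑ u ∈ S, udeg w u
      ≤ ∑ u ∈ S, (S.card + ∑ v ∈ Sᶜ, if 0 < w u v then 1 else 0) := by gcongr; exact hdeg _
    _ = S.card ^ 2 + cutE w S := by
        rw [Finset.sum_add_distrib, cutE_eq_sum_sum_compl, Finset.sum_const, smul_eq_mul, sq]

lemma sum_udeg_mul_sum_sq_le {b : ℝ} (hb : ∀ u v, |w u v| ≤ b) :
    ∑ u ∈ S, udeg w u * ∑ v ∈ S, w u v ^ 2 ≤
      (S.card : ℝ) * b ^ 2 * ((S.card : ℝ) ^ 2 + cutE w S) := by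
  have hsq (u : Fin n) : ∑ v ∈ S, w u v ^ 2 ≤ S.card * b ^ 2 := by
    rw [← nsmul_eq_mul]
    refine Finset.sum_le_card_nsmul _ _ _ fun v _ ↦ ?_
    rw [← sq_abs]
    gcongr
    exact hb u v
  calc ∑ u ∈ S, udeg w u * ∑ v ∈ S, w u v ^ 2
      ≤ ∑ u ∈ S, udeg w u * (S.card * b ^ 2) := by gcongr; exact hsq _
    _ = S.card * b ^ 2 * (∑ u ∈ S, udeg w u : ℕ) := by
        rw [← Finset.sum_mul, mul_comm, Nat.cast_sum]
    _ ≤ S.card * b ^ 2 * ((S.card : ℝ) ^ 2 + cutE w S) := by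
        gcongr
        exact_mod_cast sum_udeg_le w S

lemma mul_card_le_mul_cutW_of_expansion {ε γ : ℝ} (hε : 0 < ε) (hγ : 0 ≤ γ) (hw : ∀ u v, 0 ≤ w u v)
    (hweights : ∀ u v, 0 < w u v → γ ≤ w u v) (hexp : (S.card : ℝ) / ε ≤ cutE w S) :
    γ * S.card ≤ ε * cutW w S :=
  calc γ * S.card ≤ γ * (cutE w S * ε) := by gcongr; exact (div_le_iff₀ hε).mp hexp
    _ = ε * (γ * cutE w S) := by ring
    _ ≤ ε * cutW w S := by gcongr; exact mul_cutE_le_cutW hw hweights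

lemma mul_sum_udeg_mul_sum_sq_le_of_expansion {ε γ : ℝ} (hε : 0 < ε) (hγ : ε ^ 2 ≤ γ)
    (hw : ∀ u v, 0 ≤ w u v) (hweights : ∀ u v, 0 < w u v → γ ≤ w u v ∧ w u v ≤ 2 * γ)
    (hexp : (S.card : ℝ) / ε ≤ cutE w S) :
    ε * ∑ u ∈ S, udeg w u * ∑ v ∈ S, w u v ^ 2 ≤ 4 * (cutW w S + 1) * (ε * cutW w S) ^ 2 := by
  have hγ0 : 0 ≤ γ := (sq_nonneg ε).trans hγ
  have hb (u v : Fin n) : |w u v| ≤ 2 * γ := by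
    rw [abs_of_nonneg (hw u v)]
    rcases (hw u v).eq_or_lt with h | h
    · linarith
    · exact (hweights u v h).2
  have hlow (u v : Fin n) (h : 0 < w u v) : γ ≤ w u v := (hweights u v h).1
  have hc : γ * cutE w S ≤ cutW w S := mul_cutE_le_cutW hw hlow
  have hk : γ * S.card ≤ ε * cutW w S := mul_card_le_mul_cutW_of_expansion hε hγ0 hw hlow hexp
  have hcut : 0 ≤ cutW w S := (mul_nonneg hγ0 (Nat.cast_nonneg _)).trans hc
  have hεk : ε * S.card ≤ cutW w S := by
    refine le_of_mul_le_mul_left ?_ hε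
    calc ε * (ε * S.card) = ε ^ 2 * S.card := by ring
      _ ≤ γ * S.card := by gcongr
      _ ≤ ε * cutW w S := hk
  calc ε * ∑ u ∈ S, udeg w u * ∑ v ∈ S, w u v ^ 2
      ≤ ε * (S.card * (2 * γ) ^ 2 * ((S.card : ℝ) ^ 2 + cutE w S)) := by
        gcongr
        exact sum_udeg_mul_sum_sq_le hb
    _ = 4 * ((γ * S.card) ^ 2 * (ε * S.card) + ε * (γ * S.card) * (γ * cutE w S)) := by ring
    _ ≤ 4 * ((ε * cutW w S) ^ 2 * cutW w S + ε * (ε * cutW w S) * cutW w S) := by gcongr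
    _ = 4 * (cutW w S + 1) * (ε * cutW w S) ^ 2 := by ring

lemma cutW_pos_of_expansion {ε γ : ℝ} (hε : 0 < ε) (hγ : 0 < γ) (hw : ∀ u v, 0 ≤ w u v)
    (hweights : ∀ u v, 0 < w u v → γ ≤ w u v) (hexp : (S.card : ℝ) / ε ≤ cutE w S)
    (hS : S.Nonempty) : 0 < cutW w S := by
  have hk : 0 < γ * S.card := mul_pos hγ (Nat.cast_pos.mpr hS.card_pos)
  have hc : 0 < ε * cutW w S :=
    hk.trans_le (mul_card_le_mul_cutW_of_expansion hε hγ.le hw hweights hexp)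
  exact pos_of_mul_pos_right hc hε.le

end Expansion

theorem stmt_3_general (n s : ℕ) (ε γ : ℝ) (w : Fin n → Fin n → ℝ)
    (hspos : 0 < s) (hs : (s : ℝ) = 1 / ε) (hnonneg : ∀ u v, 0 ≤ w u v) (hγ : ε ^ 2 < γ)
    (hweights : ∀ u v, 0 < w u v → γ ≤ w u v ∧ w u v < 2 * γ)
    (S : Finset (Fin n)) (hexp : S.Nonempty → (S.card : ℝ) / ε ≤ (cutE w S : ℝ)) :
    (∑ ω : Fin n → Fin s → Fin n, sampleProb w ω * estI w S ω) = cutW w S ∧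
      ∀ t : ℝ, 0 < t → 1 - 4 * (cutW w S + 1) / t ^ 2 ≤
        ∑ ω ∈ Finset.univ.filter (fun ω : Fin n → Fin s → Fin n =>
            |estI w S ω - cutW w S| ≤ t * ε * cutW w S),
          sampleProb w ω := by
  have hmean : ∫ ω, estI w S ω ∂sampleMeasure s w = cutW w S := integral_estI hspos.ne' hnonneg
  refine ⟨by rw [← integral_sampleMeasure, hmean], fun t ht ↦ ?_⟩
  rw [← measureReal_sampleMeasure_setOf]
  rcases S.eq_empty_or_nonempty with rfl | hS
  · suffices 0 ≤ 4 / t ^ 2 by simpa [estI, cutW]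
    positivity
  have hε : 0 < ε := one_div_pos.mp (hs ▸ Nat.cast_pos.mpr hspos)
  have hcut : 0 < cutW w S := cutW_pos_of_expansion hε ((sq_nonneg ε).trans_lt hγ) hnonneg
    (fun u v h ↦ (hweights u v h).1) (hexp hS) hS
  have hvar : Var[estI w S; sampleMeasure s w] ≤ 4 * (cutW w S + 1) * (ε * cutW w S) ^ 2 := by
    refine (variance_estI_le hnonneg).trans ?_
    rw [hs, div_div_eq_mul_div, div_one, mul_comm]
    exact mul_sum_udeg_mul_sum_sq_le_of_expansion hε hγ.le hnonneg
      (fun u v h ↦ (hweights u v h).imp_right le_of_lt) (hexp hS)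
  calc 1 - 4 * (cutW w S + 1) / t ^ 2
      = 1 - 4 * (cutW w S + 1) * (ε * cutW w S) ^ 2 / (t * ε * cutW w S) ^ 2 := by field_simp
    _ ≤ 1 - Var[estI w S; sampleMeasure s w] / (t * ε * cutW w S) ^ 2 := by gcongr
    _ ≤ (sampleMeasure s w).real {ω | |estI w S ω - cutW w S| ≤ t * ε * cutW w S} := by
        rw [← hmean]
        exact one_sub_variance_div_sq_le_measureReal .of_discrete (by rw [hmean]; positivity)

theorem stmt_3 (n s : ℕ) (ε γ : ℝ) (w : Fin n → Fin n → ℝ)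
    (hεlo : 1 / (n : ℝ) ≤ ε) (hεhi : ε ≤ 1 / 30)
    (hspos : 0 < s) (hs : (s : ℝ) = 1 / ε)
    (hsym : ∀ u v, w u v = w v u) (hnonneg : ∀ u v, 0 ≤ w u v)
    (hdiag : ∀ u, w u u = 0)
    (hγ : ε ^ 2 < γ)
    (hweights : ∀ u v, 0 < w u v → γ ≤ w u v ∧ w u v < 2 * γ)
    (hexp : ∀ S : Finset (Fin n), S.Nonempty → (S.card : ℝ) ≤ (n : ℝ) / 2 →
      (S.card : ℝ) / ε ≤ (cutE w S : ℝ))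
    (S : Finset (Fin n)) (hScard : (S.card : ℝ) ≤ (n : ℝ) / 2)
    (hcut : cutW w S ≤ 5) :
    (∑ ω : Fin n → Fin s → Fin n, sampleProb w ω * estI w S ω) = cutW w S ∧
      (8 : ℝ) / 9 ≤
        ∑ ω ∈ Finset.univ.filter (fun ω : Fin n → Fin s → Fin n =>
            |estI w S ω - cutW w S| ≤ 21 * ε * cutW w S),
          sampleProb w ω := by
  obtain ⟨hmean, hconc⟩ :=
    stmt_3_general n s ε γ w hspos hs hnonneg hγ hweights S fun hS ↦ hexp S hS hScard
  exact ⟨hmean, le_trans (by linarith) (hconc 21 (by norm_num))⟩
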